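/- arXiv:2307.13916 — 8 statements merged into one kernel-verified Lean document; each statement's English description precedes it below -/
import Mathlib

section
/- Let θ*_0, θ*_1, θ̂_0, θ̂_1, x̃ ∈ ℝ^d with ‖θ*_a‖₂ ≤ R_θ for a ∈ {0,1} and ‖x̃‖₂ ≤ 1, and let p₀ ∈ (0, 1/2]. Let a* ∈ argmax_{a∈{0,1}} ⟨θ*_a, x̃⟩ and ã ∈ argmax_{a∈{0,1}} ⟨θ̂_a, x̃⟩. Then ⟨θ*_{a*}, x̃⟩ − [(1−p₀)·⟨θ*_{ã}, x̃⟩ + p₀·⟨θ*_{1−ã}, x̃⟩] ≤ 2·p₀·R_θ + 2·max_{a∈{0,1}} ‖θ̂_a − θ*_a‖₂. -/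
open RealInnerProductSpace

theorem abs_inner_le_norm_of_norm_le_one {E : Type*} [NormedAddCommGroup E]
    [InnerProductSpace ℝ E] (v : E) {x : E} (hx : ‖x‖ ≤ 1) : |⟪v, x⟫| ≤ ‖v‖ :=
  (abs_real_inner_le_norm v x).trans (mul_le_of_le_one_right (norm_nonneg v) hx)

theorem stmt3 (d : ℕ) (hd : 1 ≤ d) (Rθ : ℝ) (hRθ : 0 < Rθ)
    (θs θh : Fin 2 → EuclideanSpace ℝ (Fin d))
    (hθ : ∀ a, ‖θs a‖ ≤ Rθ)
    (xt : EuclideanSpace ℝ (Fin d)) (hx : ‖xt‖ ≤ 1)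
    (p₀ : ℝ) (hp : p₀ ∈ Set.Ioc (0:ℝ) (1/2))
    (astar atil : Fin 2)
    (hastar : ∀ a, ⟪θs a, xt⟫ ≤ ⟪θs astar, xt⟫)
    (hatil : ∀ a, ⟪θh a, xt⟫ ≤ ⟪θh atil, xt⟫) :
    ⟪θs astar, xt⟫ - ((1 - p₀) * ⟪θs atil, xt⟫ + p₀ * ⟪θs (1 - atil), xt⟫)
      ≤ 2 * p₀ * Rθ + 2 * max ‖θh 0 - θs 0‖ ‖θh 1 - θs 1‖ := by
  have hR : ∀ a, |⟪θs a, xt⟫| ≤ Rθ := fun a =>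
    (abs_inner_le_norm_of_norm_le_one (θs a) hx).trans (hθ a)
  have herr : ∀ a, |⟪θh a, xt⟫ - ⟪θs a, xt⟫| ≤ max ‖θh 0 - θs 0‖ ‖θh 1 - θs 1‖ := by
    intro a
    rw [← inner_sub_left]
    refine (abs_inner_le_norm_of_norm_le_one _ hx).trans ?_
    fin_cases a
    · exact le_max_left _ _
    · exact le_max_right _ _
  have hexplore : p₀ * (⟪θs atil, xt⟫ - ⟪θs (1 - atil), xt⟫) ≤ p₀ * (2 * Rθ) := by
    refine mul_le_mul_of_nonneg_left ?_ hp.1.le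
    linarith [(abs_le.mp (hR atil)).2, (abs_le.mp (hR (1 - atil))).1]
  linarith [hatil astar, (abs_le.mp (herr astar)).1, (abs_le.mp (herr atil)).2]
end

section
/- Fix integers 0 ≤ T₀ < T, constants R_θ > 0, ρ ∈ (0,1), p₀ ∈ (0, 1/2], and θ*_0, θ*_1 ∈ ℝ^d with ‖θ*_a‖₂ ≤ R_θ. For each t ∈ {1,…,T} let x_t, ε_t ∈ ℝ^d with ‖x_t‖₂ ≤ 1, x̃_t := x_t + ε_t, ‖x̃_t‖₂ ≤ 1, and |⟨θ*_1 − θ*_0, ε_t⟩| ≤ ρ·|⟨θ*_1 − θ*_0, x_t⟩|. For t ≤ T₀ let π_t(0), π_t(1) ≥ p₀ be arbitrary with π_t(0)+π_t(1) = 1. For t > T₀ let θ̂_0^{(t−1)}, θ̂_1^{(t−1)} ∈ ℝ^d be arbitrary, let ã_t ∈ argmax_{a∈{0,1}} ⟨θ̂_a^{(t−1)}, x̃_t⟩, and set π_t(ã_t) = 1 − p₀, π_t(1−ã_t) = p₀. Let a*_t ∈ argmax_{a∈{0,1}} ⟨θ*_a, x_t⟩ and define the clipped benchmark π̄*_t(a*_t)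 = 1 − p₀, π̄*_t(1−a*_t) = p₀. Then Σ_{t=1}^T [Σ_{a∈{0,1}} π̄*_t(a)·⟨θ*_a, x_t⟩ − Σ_{a∈{0,1}} π_t(a)·⟨θ*_a, x_t⟩] ≤ 2·T₀·R_θ + (2·(1−2p₀)/(1−ρ))·Σ_{t=T₀+1}^T max_{a∈{0,1}} ‖θ̂_a^{(t−1)} − θ*_a‖₂. -/
open RealInnerProductSpace Finset

/-- If the estimated parameters weakly prefer the second arm at the noisy context `x + e`, the
true advantage of the first arm at `x` is controlled by the estimation errors. -/
lemma inner_sub_le_of_greedy {E : Type*} [NormedAddCommGroup E] [InnerProductSpace ℝ E]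
    {θ θ' h h' x e : E} {ρ m : ℝ} (hρ : ρ < 1) (hxe : ‖x + e‖ ≤ 1)
    (he : |⟪θ - θ', e⟫| ≤ ρ * |⟪θ - θ', x⟫|) (hopt : ⟪θ', x⟫ ≤ ⟪θ, x⟫)
    (hgreedy : ⟪h, x + e⟫ ≤ ⟪h', x + e⟫) (hm : ‖h - θ‖ ≤ m) (hm' : ‖h' - θ'‖ ≤ m) :
    ⟪θ, x⟫ - ⟪θ', x⟫ ≤ 2 / (1 - ρ) * m := by
  have cauchy : ∀ v : E, ‖v‖ ≤ m → |⟪v, x + e⟫| ≤ m := fun v hv =>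
    (abs_real_inner_le_norm v (x + e)).trans
      ((mul_le_of_le_one_right (norm_nonneg v) hxe).trans hv)
  have b := (abs_le.mp (cauchy _ hm)).1
  have b' := (abs_le.mp (cauchy _ hm')).2
  have hgap : 0 ≤ ⟪θ - θ', x⟫ := by rw [inner_sub_left]; linarith
  rw [abs_of_nonneg hgap] at he
  have he' := (abs_le.mp he).1
  simp only [inner_sub_left, inner_add_right] at *
  rw [div_mul_eq_mul_div, le_div_iff₀ (by linarith)]
  nlinarith

/-- Two convex combinations of two numbers in `[-R, R]` differ by at most `2 * R`. -/
lemma convex_comb_sub_le {R u v u' v' p q w : ℝ} (hp : 0 ≤ p) (hp1 : p ≤ 1) (hq : 0 ≤ q)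
    (hw : 0 ≤ w) (hqw : q + w = 1) (hu : |u| ≤ R) (hv : |v| ≤ R) (hu' : |u'| ≤ R)
    (hv' : |v'| ≤ R) :
    ((1 - p) * u + p * v) - (q * u' + w * v') ≤ 2 * R := by
  rw [abs_le] at *
  have h₁ := mul_le_mul_of_nonneg_left hu.2 (sub_nonneg.mpr hp1)
  have h₂ := mul_le_mul_of_nonneg_left hv.2 hp
  have h₃ := mul_le_mul_of_nonneg_left hu'.1 hq
  have h₄ := mul_le_mul_of_nonneg_left hv'.1 hw
  have h₅ : q * R + w * R = R := by rw [← add_mul, hqw, one_mul]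
  linarith

theorem stmt6 (d : ℕ) (hd : 1 ≤ d) (T₀ T : ℕ) (hT : T₀ < T)
    (Rθ ρ p₀ : ℝ) (hRθ : 0 < Rθ) (hρ : ρ ∈ Set.Ioo (0:ℝ) 1)
    (hp₀ : p₀ ∈ Set.Ioc (0:ℝ) (1/2))
    (θs : Fin 2 → EuclideanSpace ℝ (Fin d)) (hθ : ∀ a, ‖θs a‖ ≤ Rθ)
    (x ε : ℕ → EuclideanSpace ℝ (Fin d))
    (hx : ∀ t ∈ Finset.Icc 1 T, ‖x t‖ ≤ 1)
    (hxt : ∀ t ∈ Finset.Icc 1 T, ‖x t + ε t‖ ≤ 1)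
    (hε : ∀ t ∈ Finset.Icc 1 T,
      |⟪θs 1 - θs 0, ε t⟫| ≤ ρ * |⟪θs 1 - θs 0, x t⟫|)
    (π : ℕ → Fin 2 → ℝ)
    (hπwarm : ∀ t ∈ Finset.Icc 1 T₀, (∀ a, p₀ ≤ π t a) ∧ π t 0 + π t 1 = 1)
    (θh : ℕ → Fin 2 → EuclideanSpace ℝ (Fin d))
    (atil : ℕ → Fin 2)
    (hgreedy : ∀ t ∈ Finset.Icc (T₀+1) T,
      ∀ a, ⟪θh t a, x t + ε t⟫ ≤ ⟪θh t (atil t), x t + ε t⟫)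
    (hπgreedy : ∀ t ∈ Finset.Icc (T₀+1) T,
      π t (atil t) = 1 - p₀ ∧ π t (1 - atil t) = p₀)
    (astar : ℕ → Fin 2)
    (hastar : ∀ t ∈ Finset.Icc 1 T, ∀ a, ⟪θs a, x t⟫ ≤ ⟪θs (astar t), x t⟫) :
    ∑ t ∈ Finset.Icc 1 T,
        (((1 - p₀) * ⟪θs (astar t), x t⟫ + p₀ * ⟪θs (1 - astar t), x t⟫)
          - (π t 0 * ⟪θs 0, x t⟫ + π t 1 * ⟪θs 1, x t⟫))
      ≤ 2 * T₀ * Rθ + (2 * (1 - 2 * p₀) / (1 - ρ)) *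
          ∑ t ∈ Finset.Icc (T₀+1) T, max ‖θh t 0 - θs 0‖ ‖θh t 1 - θs 1‖ := by
  obtain ⟨hρ0, hρ1⟩ := hρ
  obtain ⟨hp0, hp1⟩ := hp₀
  have hwarm : ∀ t ∈ Finset.Icc 1 T₀,
      ((1 - p₀) * ⟪θs (astar t), x t⟫ + p₀ * ⟪θs (1 - astar t), x t⟫)
        - (π t 0 * ⟪θs 0, x t⟫ + π t 1 * ⟪θs 1, x t⟫) ≤ 2 * Rθ := by
    intro t ht
    have htT : t ∈ Finset.Icc 1 T := by
      rw [Finset.mem_Icc] at *; omega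
    have hu : ∀ a, |⟪θs a, x t⟫| ≤ Rθ := fun a =>
      (abs_real_inner_le_norm _ _).trans
        ((mul_le_of_le_one_right (norm_nonneg _) (hx t htT)).trans (hθ a))
    obtain ⟨hπ, hsum⟩ := hπwarm t ht
    exact convex_comb_sub_le hp0.le (by linarith) (hp0.le.trans (hπ 0)) (hp0.le.trans (hπ 1))
      hsum (hu _) (hu _) (hu _) (hu _)
  have hexploit : ∀ t ∈ Finset.Icc (T₀ + 1) T,
      ((1 - p₀) * ⟪θs (astar t), x t⟫ + p₀ * ⟪θs (1 - astar t), x t⟫)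
        - (π t 0 * ⟪θs 0, x t⟫ + π t 1 * ⟪θs 1, x t⟫)
      ≤ (2 * (1 - 2 * p₀) / (1 - ρ)) * max ‖θh t 0 - θs 0‖ ‖θh t 1 - θs 1‖ := by
    intro t ht
    have htT : t ∈ Finset.Icc 1 T := by
      rw [Finset.mem_Icc] at *; omega
    have hm0 := le_max_left ‖θh t 0 - θs 0‖ ‖θh t 1 - θs 1‖
    have hm1 := le_max_right ‖θh t 0 - θs 0‖ ‖θh t 1 - θs 1‖
    have hxe := hxt t htT
    have he := hε t htT
    have he' : |⟪θs 0 - θs 1, ε t⟫| ≤ ρ * |⟪θs 0 - θs 1, x t⟫| := by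
      rw [← neg_sub (θs 1), inner_neg_left, inner_neg_left, abs_neg, abs_neg]
      exact he
    have hg := hgreedy t ht
    have ho := hastar t htT
    obtain ⟨hπ, hπ'⟩ := hπgreedy t ht
    generalize max ‖θh t 0 - θs 0‖ ‖θh t 1 - θs 1‖ = m at *
    have hm : 0 ≤ m := (norm_nonneg _).trans hm0
    have hc : 0 ≤ 1 - 2 * p₀ := by linarith
    have hrhs : 0 ≤ (2 * (1 - 2 * p₀) / (1 - ρ)) * m :=
      mul_nonneg (div_nonneg (by linarith) (by linarith)) hm
    have hfactor : (2 * (1 - 2 * p₀) / (1 - ρ)) * m = (1 - 2 * p₀) * (2 / (1 - ρ) * m) := by ring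
    have h01 : (1 : Fin 2) - 0 = 1 := rfl
    have h11 : (1 : Fin 2) - 1 = 0 := rfl
    have hcases : ∀ a : Fin 2, a = 0 ∨ a = 1 := by decide
    rcases hcases (astar t) with hs | hs <;>
    rcases hcases (atil t) with ha | ha <;>
    simp only [hs, ha, h01, h11] at hπ hπ' hg ho ⊢ <;> rw [hπ, hπ']
    · linarith
    · have := mul_le_mul_of_nonneg_left
        (inner_sub_le_of_greedy hρ1 hxe he' (ho 1) (hg 0) hm0 hm1) hc
      linarith
    · have := mul_le_mul_of_nonneg_left
        (inner_sub_le_of_greedy hρ1 hxe he (ho 0) (hg 1) hm1 hm0) hc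
      linarith
    · linarith
  have hsplit : Finset.Icc 1 T = Finset.Icc 1 T₀ ∪ Finset.Icc (T₀ + 1) T := by
    ext t
    simp only [Finset.mem_union, Finset.mem_Icc]
    omega
  have hdisj : Disjoint (Finset.Icc 1 T₀) (Finset.Icc (T₀ + 1) T) := by
    rw [Finset.disjoint_left]
    intro t
    simp only [Finset.mem_Icc]
    omega
  rw [hsplit, Finset.sum_union hdisj, Finset.mul_sum]
  refine add_le_add ((Finset.sum_le_card_nsmul _ _ _ hwarm).trans_eq ?_)
    (Finset.sum_le_sum hexploit)
  rw [Nat.card_Icc, Nat.add_sub_cancel, nsmul_eq_mul]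
  ring
end

section
/- Fix integers 0 ≤ T₀ < T, K ≥ 2, constants R_θ > 0 and ρ ∈ (0,1), and θ*_a ∈ ℝ^d with ‖θ*_a‖₂ ≤ R_θ for all a in the action set A = {1,…,K}. For each t ∈ {1,…,T} let x_t, ε_t ∈ ℝ^d with ‖x_t‖₂ ≤ 1, x̃_t := x_t + ε_t, ‖x̃_t‖₂ ≤ 1, and |⟨θ*_{a₁} − θ*_{a₂}, ε_t⟩| ≤ ρ·|⟨θ*_{a₁} − θ*_{a₂}, x_t⟩| for all a₁, a₂ ∈ A. Let p₀^{(t)} ∈ (0, 1/K]. For t ≤ T₀ let (π_t(a))_{a∈A} be any probability vector with π_t(a) ≥ p₀^{(t)} for all a. For t > T₀ let (θ̂_a^{(t−1)})_{a∈A} ⊂ ℝ^d be arbitrary, let ã_t ∈ argmax_{a∈A} ⟨θ̂_a^{(t−1)}, x̃_t⟩, and set π_t(ã_t) = 1 − (K−1)·p₀^{(t)} and π_t(a) = p₀^{(t)} for a ≠ ã_t. Let a*_t ∈ argmax_{a∈A} ⟨θ*_a, x_t⟩. Then Σ_{t=1}^T [⟨θ*_{a*_t}, x_t⟩ − Σ_{a∈A}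 π_t(a)·⟨θ*_a, x_t⟩] ≤ 2·T₀·R_θ + (2/(1−ρ))·Σ_{t=T₀+1}^T [(K−1)·p₀^{(t)}·R_θ + max_{a∈A} ‖θ̂_a^{(t−1)} − θ*_a‖₂]. -/
open RealInnerProductSpace Finset

section Regret

variable {ι E : Type*} [Fintype ι] [NormedAddCommGroup E] [InnerProductSpace ℝ E]

/-- Two vectors of norm at most `R` differ by at most `2 * R` when paired with a vector in the
unit ball. -/
lemma inner_sub_inner_le_two_mul {u v x : E} {R : ℝ} (hu : ‖u‖ ≤ R) (hv : ‖v‖ ≤ R)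
    (hx : ‖x‖ ≤ 1) : ⟪u, x⟫ - ⟪v, x⟫ ≤ 2 * R := by
  have hle : ‖u - v‖ ≤ 2 * R := by linarith [norm_sub_le u v]
  calc ⟪u, x⟫ - ⟪v, x⟫ = ⟪u - v, x⟫ := (inner_sub_left u v x).symm
    _ ≤ ‖u - v‖ * ‖x‖ := real_inner_le_norm _ _
    _ ≤ ‖u - v‖ := mul_le_of_le_one_right (norm_nonneg _) hx
    _ ≤ 2 * R := hle

/-- The expected regret of a probability vector is the average of the gaps. -/
lemma sub_sum_mul_eq_sum_mul_sub {w : ι → ℝ} (hw : ∑ a, w a = 1) (c : ℝ) (f : ι → ℝ) :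
    c - ∑ a, w a * f a = ∑ a, w a * (c - f a) := by
  simp only [mul_sub, Finset.sum_sub_distrib, ← Finset.sum_mul, hw, one_mul]

/-- Averaging a function bounded by `B` against a probability vector gives at most `B`. -/
lemma sum_mul_le_of_le {w g : ι → ℝ} {B : ℝ} (hw₀ : ∀ a, 0 ≤ w a) (hw : ∑ a, w a = 1)
    (hg : ∀ a, g a ≤ B) : ∑ a, w a * g a ≤ B :=
  calc ∑ a, w a * g a ≤ ∑ a, w a * B :=
        Finset.sum_le_sum fun a _ => mul_le_mul_of_nonneg_left (hg a) (hw₀ a)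
    _ = B := by rw [← Finset.sum_mul, hw, one_mul]

/-- Splitting a sum against a clipped point mass at `b` into the contribution of `b` and of the
remaining indices. -/
lemma sum_clipped_mul [DecidableEq ι] {w : ι → ℝ} {p : ℝ} {b : ι} (hw : ∀ a ≠ b, w a = p)
    (g : ι → ℝ) : ∑ a, w a * g a = w b * g b + p * ∑ a ∈ Finset.univ.erase b, g a := by
  rw [← Finset.add_sum_erase _ _ (Finset.mem_univ b), Finset.mul_sum]
  congr 1
  exact Finset.sum_congr rfl fun a ha => by rw [hw a (Finset.ne_of_mem_erase ha)]

/-- An index that is greedy for the estimates `θh` at `y` is nearly greedy for the true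
parameters `θs` at `y`. -/
lemma inner_sub_le_of_greedy_s7 {θs θh : ι → E} {y : E} {b : ι} (hy : ‖y‖ ≤ 1)
    (hb : ∀ a, ⟪θh a, y⟫ ≤ ⟪θh b, y⟫) (a : ι) :
    ⟪θs a - θs b, y⟫ ≤ 2 * ⨆ i, ‖θh i - θs i‖ := by
  have hsup (i : ι) : |⟪θh i - θs i, y⟫| ≤ ⨆ i, ‖θh i - θs i‖ :=
    calc |⟪θh i - θs i, y⟫| ≤ ‖θh i - θs i‖ * ‖y‖ := abs_real_inner_le_norm _ _
      _ ≤ ‖θh i - θs i‖ := mul_le_of_le_one_right (norm_nonneg _) hy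
      _ ≤ _ := le_ciSup (f := fun i => ‖θh i - θs i‖) (Set.finite_range _).bddAbove i
  have ha := (abs_le.mp (hsup a)).1
  have hb' := (abs_le.mp (hsup b)).2
  rw [inner_sub_left] at ha hb' ⊢
  linarith [hb a]

/-- Under a relative error `ρ` on the context, a nonnegative gap at `x` is controlled by the gap
at the perturbed context `x + e`. -/
lemma one_sub_mul_inner_le {v x e : E} {ρ : ℝ} (hv : 0 ≤ ⟪v, x⟫)
    (he : |⟪v, e⟫| ≤ ρ * |⟪v, x⟫|) : (1 - ρ) * ⟪v, x⟫ ≤ ⟪v, x + e⟫ := by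
  rw [abs_of_nonneg hv] at he
  rw [inner_add_right]
  linarith [(abs_le.mp he).1]

/-- Regret of a single round of the clipped greedy policy. -/
lemma clipped_greedy_regret_le {θs θh : ι → E} {x e : E} {R ρ p : ℝ} {w : ι → ℝ} {b s : ι}
    (hρ : ρ ∈ Set.Ioo (0 : ℝ) 1) (hθ : ∀ a, ‖θs a‖ ≤ R) (hx : ‖x‖ ≤ 1) (hxe : ‖x + e‖ ≤ 1)
    (he : ∀ a₁ a₂, |⟪θs a₁ - θs a₂, e⟫| ≤ ρ * |⟪θs a₁ - θs a₂, x⟫|) (hp : 0 ≤ p)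
    (hb : ∀ a, ⟪θh a, x + e⟫ ≤ ⟪θh b, x + e⟫)
    (hwb : w b = 1 - ((Fintype.card ι : ℝ) - 1) * p) (hw : ∀ a ≠ b, w a = p)
    (hs : ∀ a, ⟪θs a, x⟫ ≤ ⟪θs s, x⟫) :
    ⟪θs s, x⟫ - ∑ a, w a * ⟪θs a, x⟫ ≤
      2 / (1 - ρ) * (((Fintype.card ι : ℝ) - 1) * p * R + ⨆ a, ‖θh a - θs a‖) := by
  classical
  have hρ' : 0 < 1 - ρ := sub_pos.mpr hρ.2
  have hR : 0 ≤ R := (norm_nonneg _).trans (hθ b)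
  have hcard : ((Finset.univ.erase b).card : ℝ) = (Fintype.card ι : ℝ) - 1 := by
    rw [Finset.card_erase_of_mem (Finset.mem_univ b), Finset.card_univ,
      Nat.cast_pred (Fintype.card_pos_iff.mpr ⟨b⟩)]
  have hk : 0 ≤ (Fintype.card ι : ℝ) - 1 := hcard ▸ Nat.cast_nonneg _
  have hsum : ∑ a, w a = 1 := by
    have h := sum_clipped_mul hw fun _ => 1
    simp only [mul_one, Finset.sum_const, nsmul_eq_mul, hcard, hwb] at h
    linarith
  have hothers : ∑ a ∈ Finset.univ.erase b, (⟪θs s, x⟫ - ⟪θs a, x⟫) ≤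
      ((Fintype.card ι : ℝ) - 1) * (2 * R) := by
    rw [← hcard, ← nsmul_eq_mul]
    exact Finset.sum_le_card_nsmul _ _ _ fun a _ => inner_sub_inner_le_two_mul (hθ s) (hθ a) hx
  have hgap₀ : 0 ≤ ⟪θs s, x⟫ - ⟪θs b, x⟫ := sub_nonneg.mpr (hs b)
  have hgap : (1 - ρ) * (⟪θs s, x⟫ - ⟪θs b, x⟫) ≤ 2 * ⨆ a, ‖θh a - θs a‖ := by
    rw [← inner_sub_left] at hgap₀ ⊢
    exact (one_sub_mul_inner_le hgap₀ (he s b)).trans (inner_sub_le_of_greedy_s7 hxe hb s)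
  have hwb₁ : w b ≤ 1 := by
    rw [hwb]
    linarith [mul_nonneg hk hp]
  have hkpR : 0 ≤ ((Fintype.card ι : ℝ) - 1) * p * R := mul_nonneg (mul_nonneg hk hp) hR
  have hregret : ⟪θs s, x⟫ - ∑ a, w a * ⟪θs a, x⟫ ≤
      (⟪θs s, x⟫ - ⟪θs b, x⟫) + 2 * (((Fintype.card ι : ℝ) - 1) * p * R) := by
    rw [sub_sum_mul_eq_sum_mul_sub hsum, sum_clipped_mul hw]
    have h₁ := mul_le_of_le_one_left hgap₀ hwb₁
    have h₂ := mul_le_mul_of_nonneg_left hothers hp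
    linarith
  rw [div_mul_eq_mul_div, le_div_iff₀ hρ']
  have h₁ := mul_le_mul_of_nonneg_right hregret hρ'.le
  have h₂ := mul_nonneg hρ.1.le hkpR
  linarith

end Regret

theorem stmt7 (d : ℕ) (hd : 1 ≤ d) (K : ℕ) (hK : 2 ≤ K)
    (T₀ T : ℕ) (hT : T₀ < T)
    (Rθ ρ : ℝ) (hRθ : 0 < Rθ) (hρ : ρ ∈ Set.Ioo (0:ℝ) 1)
    (θs : Fin K → EuclideanSpace ℝ (Fin d)) (hθ : ∀ a, ‖θs a‖ ≤ Rθ)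
    (x ε : ℕ → EuclideanSpace ℝ (Fin d))
    (hx : ∀ t ∈ Finset.Icc 1 T, ‖x t‖ ≤ 1)
    (hxt : ∀ t ∈ Finset.Icc 1 T, ‖x t + ε t‖ ≤ 1)
    (hε : ∀ t ∈ Finset.Icc 1 T, ∀ a₁ a₂ : Fin K,
      |⟪θs a₁ - θs a₂, ε t⟫| ≤ ρ * |⟪θs a₁ - θs a₂, x t⟫|)
    (p₀ : ℕ → ℝ)
    (hp₀ : ∀ t ∈ Finset.Icc 1 T, 0 < p₀ t ∧ p₀ t ≤ 1 / (K : ℝ))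
    (π : ℕ → Fin K → ℝ)
    (hπwarm : ∀ t ∈ Finset.Icc 1 T₀,
      (∀ a, p₀ t ≤ π t a) ∧ ∑ a, π t a = 1)
    (θh : ℕ → Fin K → EuclideanSpace ℝ (Fin d))
    (atil : ℕ → Fin K)
    (hgreedy : ∀ t ∈ Finset.Icc (T₀+1) T,
      ∀ a, ⟪θh t a, x t + ε t⟫ ≤ ⟪θh t (atil t), x t + ε t⟫)
    (hπgreedy : ∀ t ∈ Finset.Icc (T₀+1) T,
      π t (atil t) = 1 - ((K : ℝ) - 1) * p₀ t ∧ ∀ a ≠ atil t, π t a = p₀ t)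
    (astar : ℕ → Fin K)
    (hastar : ∀ t ∈ Finset.Icc 1 T, ∀ a, ⟪θs a, x t⟫ ≤ ⟪θs (astar t), x t⟫) :
    ∑ t ∈ Finset.Icc 1 T,
        (⟪θs (astar t), x t⟫ - ∑ a, π t a * ⟪θs a, x t⟫)
      ≤ 2 * T₀ * Rθ + (2 / (1 - ρ)) *
          ∑ t ∈ Finset.Icc (T₀+1) T,
            (((K : ℝ) - 1) * p₀ t * Rθ + ⨆ a, ‖θh t a - θs a‖) := by
  have hsplit : Finset.Icc 1 T = Finset.Icc 1 T₀ ∪ Finset.Icc (T₀ + 1) T := by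
    ext t
    simp only [Finset.mem_union, Finset.mem_Icc]
    omega
  have hdisj : Disjoint (Finset.Icc 1 T₀) (Finset.Icc (T₀ + 1) T) := by
    rw [Finset.disjoint_left]
    intro t
    simp only [Finset.mem_Icc]
    omega
  have hwarm : ∀ t ∈ Finset.Icc 1 T₀, t ∈ Finset.Icc 1 T := fun t ht =>
    hsplit ▸ Finset.mem_union_left _ ht
  have hlate : ∀ t ∈ Finset.Icc (T₀ + 1) T, t ∈ Finset.Icc 1 T := fun t ht =>
    hsplit ▸ Finset.mem_union_right _ ht
  rw [hsplit, Finset.sum_union hdisj, Finset.mul_sum]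
  refine add_le_add ?_ (Finset.sum_le_sum fun t ht => ?_)
  · have h := Finset.sum_le_card_nsmul (Finset.Icc 1 T₀)
      (fun t => ⟪θs (astar t), x t⟫ - ∑ a, π t a * ⟪θs a, x t⟫) (2 * Rθ) fun t ht => by
        obtain ⟨hπ, hsum⟩ := hπwarm t ht
        rw [sub_sum_mul_eq_sum_mul_sub hsum]
        exact sum_mul_le_of_le (fun a => (hp₀ t (hwarm t ht)).1.le.trans (hπ a)) hsum
          fun a => inner_sub_inner_le_two_mul (hθ _) (hθ a) (hx t (hwarm t ht))
    rw [Nat.card_Icc, Nat.add_sub_cancel, nsmul_eq_mul] at h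
    linarith
  · have ht' := hlate t ht
    obtain ⟨hπb, hπ⟩ := hπgreedy t ht
    have h := clipped_greedy_regret_le hρ hθ (hx t ht') (hxt t ht') (hε t ht')
      (hp₀ t ht').1.le (hgreedy t ht) (by rw [Fintype.card_fin]; exact hπb) hπ (hastar t ht')
    rwa [Fintype.card_fin] at h
end

section
/- Fix integers 0 ≤ T₀ < T, K ≥ 2, constants R_θ > 0, ρ ∈ (0,1), p₀ ∈ (0, 1/K], and θ*_a ∈ ℝ^d with ‖θ*_a‖₂ ≤ R_θ for all a in A = {1,…,K}. For each t ∈ {1,…,T} let x_t, ε_t ∈ ℝ^d with ‖x_t‖₂ ≤ 1, x̃_t := x_t + ε_t, ‖x̃_t‖₂ ≤ 1, and |⟨θ*_{a₁} − θ*_{a₂}, ε_t⟩| ≤ ρ·|⟨θ*_{a₁} − θ*_{a₂}, x_t⟩| for all a₁, a₂ ∈ A. For t ≤ T₀ let (π_t(a))_{a∈A} be any probability vector with π_t(a) ≥ p₀ for all a. For t > T₀ let (θ̂_a^{(t−1)})_{a∈A} ⊂ ℝ^d be arbitrary, let ã_t ∈ argmax_{a∈A} ⟨θ̂_a^{(t−1)},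 x̃_t⟩, and set π_t(ã_t) = 1 − (K−1)·p₀ and π_t(a) = p₀ for a ≠ ã_t. Let a*_t ∈ argmax_{a∈A} ⟨θ*_a, x_t⟩ and define the clipped benchmark π̄*_t(a*_t) = 1 − (K−1)·p₀ and π̄*_t(a) = p₀ for a ≠ a*_t. Then Σ_{t=1}^T [Σ_{a∈A} π̄*_t(a)·⟨θ*_a, x_t⟩ − Σ_{a∈A} π_t(a)·⟨θ*_a, x_t⟩] ≤ 2·T₀·R_θ + (2·(1−K·p₀)/(1−ρ))·Σ_{t=T₀+1}^T max_{a∈A} ‖θ̂_a^{(t−1)} − θ*_a‖₂. -/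
open RealInnerProductSpace Finset

/-- The value of the policy that plays `b` with probability `1 - (K - 1) p` and every other
action with probability `p`. -/
theorem sum_clipped_mul_s8 {K : ℕ} (p : ℝ) (b : Fin K) (f : Fin K → ℝ) :
    ∑ a, (if a = b then 1 - ((K : ℝ) - 1) * p else p) * f a
      = (1 - K * p) * f b + p * ∑ a, f a := by
  have h : ∀ a, (if a = b then 1 - ((K : ℝ) - 1) * p else p) * f a
      = (if a = b then (1 - K * p) * f a else 0) + p * f a := by
    intro a
    split_ifs <;> ring
  simp_rw [h, sum_add_distrib, ← mul_sum]
  simp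

/-- The value of a clipped policy is at most any upper bound on the rewards. -/
theorem sum_clipped_mul_le {K : ℕ} {p R : ℝ} (hp : 0 ≤ p) (hKp : K * p ≤ 1) (b : Fin K)
    {f : Fin K → ℝ} (hf : ∀ a, f a ≤ R) :
    ∑ a, (if a = b then 1 - ((K : ℝ) - 1) * p else p) * f a ≤ R := by
  rw [sum_clipped_mul_s8]
  have hsum : ∑ a, f a ≤ K * R := by
    simpa using sum_le_card_nsmul univ f R fun a _ => hf a
  have hb := mul_le_mul_of_nonneg_left (hf b) (sub_nonneg.2 hKp)
  have hs := mul_le_mul_of_nonneg_left hsum hp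
  linarith

/-- A convex combination is at least any lower bound on the averaged quantities. -/
theorem le_sum_mul_of_sum_eq_one {ι : Type*} [Fintype ι] {w f : ι → ℝ} {r : ℝ}
    (hw : ∀ a, 0 ≤ w a) (hw1 : ∑ a, w a = 1) (hf : ∀ a, r ≤ f a) :
    r ≤ ∑ a, w a * f a :=
  calc r = ∑ a, w a * r := by rw [← sum_mul, hw1, one_mul]
    _ ≤ ∑ a, w a * f a := sum_le_sum fun a _ => mul_le_mul_of_nonneg_left (hf a) (hw a)

/-- The suboptimality gap of the action that is greedy for the estimates `θh` at the perturbed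
context `x + e`, under a relative perturbation error of at most `ρ`. -/
theorem greedy_gap_le {ι E : Type*} [Finite ι] [NormedAddCommGroup E] [InnerProductSpace ℝ E]
    {θs θh : ι → E} {x e : E} {ρ : ℝ} {i j : ι} (hρ : ρ < 1) (hxe : ‖x + e‖ ≤ 1)
    (he : |⟪θs i - θs j, e⟫| ≤ ρ * |⟪θs i - θs j, x⟫|)
    (hgreedy : ⟪θh i, x + e⟫ ≤ ⟪θh j, x + e⟫) (hopt : ⟪θs j, x⟫ ≤ ⟪θs i, x⟫) :
    ⟪θs i, x⟫ - ⟪θs j, x⟫ ≤ 2 / (1 - ρ) * ⨆ a, ‖θh a - θs a‖ := by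
  set M := ⨆ a, ‖θh a - θs a‖
  have hM : ∀ a, |⟪θh a - θs a, x + e⟫| ≤ M := fun a =>
    calc |⟪θh a - θs a, x + e⟫| ≤ ‖θh a - θs a‖ * ‖x + e‖ := abs_real_inner_le_norm _ _
      _ ≤ ‖θh a - θs a‖ := mul_le_of_le_one_right (norm_nonneg _) hxe
      _ ≤ M := le_ciSup (f := fun a => ‖θh a - θs a‖) (Set.finite_range _).bddAbove a
  have hi := (abs_le.1 (hM i)).1
  have hj := (abs_le.1 (hM j)).2
  simp only [inner_sub_left, inner_add_right] at he hi hj hgreedy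
  rw [abs_of_nonneg (sub_nonneg.2 hopt)] at he
  have hlow := (abs_le.1 he).1
  rw [div_mul_eq_mul_div, le_div_iff₀ (sub_pos.2 hρ)]
  linarith

theorem stmt8 (d : ℕ) (hd : 1 ≤ d) (K : ℕ) (hK : 2 ≤ K)
    (T₀ T : ℕ) (hT : T₀ < T)
    (Rθ ρ p₀ : ℝ) (hRθ : 0 < Rθ) (hρ : ρ ∈ Set.Ioo (0:ℝ) 1)
    (hp₀ : 0 < p₀ ∧ p₀ ≤ 1 / (K : ℝ))
    (θs : Fin K → EuclideanSpace ℝ (Fin d)) (hθ : ∀ a, ‖θs a‖ ≤ Rθ)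
    (x ε : ℕ → EuclideanSpace ℝ (Fin d))
    (hx : ∀ t ∈ Finset.Icc 1 T, ‖x t‖ ≤ 1)
    (hxt : ∀ t ∈ Finset.Icc 1 T, ‖x t + ε t‖ ≤ 1)
    (hε : ∀ t ∈ Finset.Icc 1 T, ∀ a₁ a₂ : Fin K,
      |⟪θs a₁ - θs a₂, ε t⟫| ≤ ρ * |⟪θs a₁ - θs a₂, x t⟫|)
    (π : ℕ → Fin K → ℝ)
    (hπwarm : ∀ t ∈ Finset.Icc 1 T₀,
      (∀ a, p₀ ≤ π t a) ∧ ∑ a, π t a = 1)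
    (θh : ℕ → Fin K → EuclideanSpace ℝ (Fin d))
    (atil : ℕ → Fin K)
    (hgreedy : ∀ t ∈ Finset.Icc (T₀+1) T,
      ∀ a, ⟪θh t a, x t + ε t⟫ ≤ ⟪θh t (atil t), x t + ε t⟫)
    (hπgreedy : ∀ t ∈ Finset.Icc (T₀+1) T,
      π t (atil t) = 1 - ((K : ℝ) - 1) * p₀ ∧ ∀ a ≠ atil t, π t a = p₀)
    (astar : ℕ → Fin K)
    (hastar : ∀ t ∈ Finset.Icc 1 T, ∀ a, ⟪θs a, x t⟫ ≤ ⟪θs (astar t), x t⟫) :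
    ∑ t ∈ Finset.Icc 1 T,
        ((∑ a, (if a = astar t then 1 - ((K : ℝ) - 1) * p₀ else p₀) * ⟪θs a, x t⟫)
          - ∑ a, π t a * ⟪θs a, x t⟫)
      ≤ 2 * T₀ * Rθ + (2 * (1 - K * p₀) / (1 - ρ)) *
          ∑ t ∈ Finset.Icc (T₀+1) T, ⨆ a, ‖θh t a - θs a‖ := by
  obtain ⟨hp, hpK⟩ := hp₀
  have hKp : K * p₀ ≤ 1 := by
    rwa [le_div_iff₀ (by positivity), mul_comm] at hpK
  have hreward : ∀ t ∈ Icc 1 T, ∀ a, |⟪θs a, x t⟫| ≤ Rθ := fun t ht a =>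
    calc |⟪θs a, x t⟫| ≤ ‖θs a‖ * ‖x t‖ := abs_real_inner_le_norm _ _
      _ ≤ ‖θs a‖ := mul_le_of_le_one_right (norm_nonneg _) (hx t ht)
      _ ≤ Rθ := hθ a
  have hsplit : Icc 1 T = Icc 1 T₀ ∪ Icc (T₀ + 1) T := by
    ext t
    simp only [mem_union, mem_Icc]
    omega
  have hdisj : Disjoint (Icc 1 T₀) (Icc (T₀ + 1) T) :=
    disjoint_left.2 fun t h₁ h₂ => by
      rw [mem_Icc] at h₁ h₂
      omega
  have hwarm_sub : Icc 1 T₀ ⊆ Icc 1 T := hsplit ▸ subset_union_left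
  have hgreedy_sub : Icc (T₀ + 1) T ⊆ Icc 1 T := hsplit ▸ subset_union_right
  rw [hsplit, sum_union hdisj, mul_sum]
  refine add_le_add ?_ (sum_le_sum fun t ht => ?_)
  · have hwarm := sum_le_card_nsmul (Icc 1 T₀)
      (fun t => (∑ a, (if a = astar t then 1 - ((K : ℝ) - 1) * p₀ else p₀) * ⟪θs a, x t⟫)
        - ∑ a, π t a * ⟪θs a, x t⟫) (2 * Rθ) fun t ht => by
        have hr := hreward t (hwarm_sub ht)
        have hup := sum_clipped_mul_le hp.le hKp (astar t) fun a => (abs_le.1 (hr a)).2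
        have hlow := le_sum_mul_of_sum_eq_one (fun a => hp.le.trans ((hπwarm t ht).1 a))
          (hπwarm t ht).2 fun a => (abs_le.1 (hr a)).1
        linarith
    rw [Nat.card_Icc, nsmul_eq_mul, Nat.add_sub_cancel] at hwarm
    linarith
  · have ht' := hgreedy_sub ht
    have hπ : ∀ a, π t a = if a = atil t then 1 - ((K : ℝ) - 1) * p₀ else p₀ := by
      intro a
      split_ifs with h
      · rw [h, (hπgreedy t ht).1]
      · exact (hπgreedy t ht).2 a h
    simp_rw [hπ]
    rw [sum_clipped_mul_s8, sum_clipped_mul_s8]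
    have hgap := mul_le_mul_of_nonneg_left
      (greedy_gap_le hρ.2 (hxt t ht') (hε t ht' (astar t) (atil t))
        (hgreedy t ht (astar t)) (hastar t ht' (atil t))) (sub_nonneg.2 hKp)
    calc _ = (1 - K * p₀) * (⟪θs (astar t), x t⟫ - ⟪θs (atil t), x t⟫) := by ring
      _ ≤ _ := hgap
      _ = _ := by ring
end

section
/- Fix an integer T ≥ 1, a nonempty set S ⊆ {1,…,T} of update times with s_min := min S, constants R_θ > 0 and ρ ∈ (0,1), and θ*_0, θ*_1 ∈ ℝ^d with ‖θ*_a‖₂ ≤ R_θ. For each t ∈ {1,…,T} let x_t, ε_t ∈ ℝ^d with ‖x_t‖₂ ≤ 1, x̃_t := x_t + ε_t, ‖x̃_t‖₂ ≤ 1, and |⟨θ*_1 − θ*_0, ε_t⟩| ≤ ρ·|⟨θ*_1 − θ*_0, x_t⟩|. Let p₀^{(t)} ∈ (0, 1/2]. For each s ∈ S let θ̂_0^{(s)}, θ̂_1^{(s)} ∈ ℝ^d be arbitrary. For t ≤ s_min let π_t(0), π_t(1) ≥ p₀^{(t)} be arbitrary with π_t(0)+π_t(1)=1; for t > s_min let s_t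 := max{s ∈ S : s < t}, let ã_t ∈ argmax_{a∈{0,1}} ⟨θ̂_a^{(s_t)}, x̃_t⟩, and set π_t(ã_t) = 1 − p₀^{(t)}, π_t(1−ã_t) = p₀^{(t)}. Let a*_t ∈ argmax_{a∈{0,1}} ⟨θ*_a, x_t⟩. Then for every T₀ with s_min ≤ T₀ < T, Σ_{t=1}^T [⟨θ*_{a*_t}, x_t⟩ − Σ_{a∈{0,1}} π_t(a)·⟨θ*_a, x_t⟩] ≤ 2·T₀·R_θ + (2/(1−ρ))·Σ_{t=T₀+1}^T (p₀^{(t)}·R_θ + max_{a∈{0,1}} ‖θ̂_a^{(s_t)} − θ*_a‖₂). -/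
open RealInnerProductSpace Finset

/-- If the estimates `ah`, `bh` of `a`, `b` are `M`-accurate and prefer `ah` at the perturbed
context `x + e`, then the gap in favour of `b` at `x` is at most `2 * M / (1 - ρ)`. -/
lemma gap_le_of_greedy {E : Type*} [NormedAddCommGroup E] [InnerProductSpace ℝ E]
    {a b ah bh x e : E} {ρ M : ℝ} (hρ : ρ ≤ 1) (hxe : ‖x + e‖ ≤ 1)
    (he : |⟪a - b, e⟫| ≤ ρ * |⟪a - b, x⟫|)
    (hgreedy : ⟪bh, x + e⟫ ≤ ⟪ah, x + e⟫) (ha : ‖ah - a‖ ≤ M) (hb : ‖bh - b‖ ≤ M) :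
    (1 - ρ) * (⟪b, x⟫ - ⟪a, x⟫) ≤ 2 * M := by
  have hM : 0 ≤ M := (norm_nonneg _).trans ha
  have estimate_error {v : E} (hv : ‖v‖ ≤ M) : |⟪v, x + e⟫| ≤ M :=
    (abs_real_inner_le_norm _ _).trans <|
      (mul_le_of_le_one_right (norm_nonneg _) hxe).trans hv
  have h1 := (abs_le.1 (estimate_error ha)).2
  have h2 := (abs_le.1 (estimate_error hb)).1
  simp only [inner_sub_left, inner_add_right] at h1 h2 he hgreedy
  rcases le_total (⟪b, x⟫) (⟪a, x⟫) with h | h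
  · have := mul_nonneg (sub_nonneg.2 hρ) (sub_nonneg.2 h)
    linarith
  · rw [abs_of_nonpos (sub_nonpos.2 h)] at he
    have := (abs_le.1 he).2
    linarith

/-- The gap between two arms of norm at most `R` is at most `2 * R` on the unit ball. -/
lemma inner_sub_inner_le_two_mul_s9 {E : Type*} [NormedAddCommGroup E] [InnerProductSpace ℝ E]
    {a b x : E} {R : ℝ} (ha : ‖a‖ ≤ R) (hb : ‖b‖ ≤ R) (hx : ‖x‖ ≤ 1) :
    ⟪a, x⟫ - ⟪b, x⟫ ≤ 2 * R := by
  have inner_bound {v : E} (hv : ‖v‖ ≤ R) : |⟪v, x⟫| ≤ R :=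
    (abs_real_inner_le_norm _ _).trans <|
      (mul_le_of_le_one_right (norm_nonneg _) hx).trans hv
  linarith [(abs_le.1 (inner_bound ha)).2, (abs_le.1 (inner_bound hb)).1]

/-- Regret of one round in which the greedy arm `a` is played with probability `1 - p`
and the other arm `b` with probability `p`. -/
lemma greedy_round_regret_le {E : Type*} [NormedAddCommGroup E] [InnerProductSpace ℝ E]
    {a b c ah bh x e : E} {ρ M R p : ℝ} (hρ : ρ ∈ Set.Ioo (0 : ℝ) 1) (hp : p ∈ Set.Icc (0 : ℝ) 1)
    (haR : ‖a‖ ≤ R) (hbR : ‖b‖ ≤ R) (hx : ‖x‖ ≤ 1) (hxe : ‖x + e‖ ≤ 1)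
    (he : |⟪a - b, e⟫| ≤ ρ * |⟪a - b, x⟫|)
    (hgreedy : ⟪bh, x + e⟫ ≤ ⟪ah, x + e⟫) (ha : ‖ah - a‖ ≤ M) (hb : ‖bh - b‖ ≤ M)
    (hc : c = a ∨ c = b) (hbest : ⟪a, x⟫ ≤ ⟪c, x⟫) :
    ⟪c, x⟫ - ((1 - p) * ⟪a, x⟫ + p * ⟪b, x⟫) ≤ 2 / (1 - ρ) * (p * R + M) := by
  have hρ' : 0 < 1 - ρ := sub_pos.2 hρ.2
  have hM : 0 ≤ M := (norm_nonneg _).trans ha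
  have hpR : 0 ≤ p * R := mul_nonneg hp.1 ((norm_nonneg _).trans haR)
  rw [div_mul_eq_mul_div, le_div_iff₀ hρ']
  rcases hc with rfl | rfl
  · have h := mul_le_mul_of_nonneg_left (inner_sub_inner_le_two_mul_s9 haR hbR hx) hp.1
    have h' := mul_le_mul_of_nonneg_right h hρ'.le
    nlinarith [mul_nonneg hpR hρ.1.le]
  · have h := gap_le_of_greedy hρ.2.le hxe he hgreedy ha hb
    have h' := mul_nonneg hp.1 (mul_nonneg hρ'.le (sub_nonneg.2 hbest))
    linarith

theorem stmt9 (d : ℕ) (hd : 1 ≤ d) (T : ℕ) (hT : 1 ≤ T)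
    (S : Finset ℕ) (hSne : S.Nonempty) (hSsub : ∀ s ∈ S, s ∈ Finset.Icc 1 T)
    (Rθ ρ : ℝ) (hRθ : 0 < Rθ) (hρ : ρ ∈ Set.Ioo (0:ℝ) 1)
    (θs : Fin 2 → EuclideanSpace ℝ (Fin d)) (hθ : ∀ a, ‖θs a‖ ≤ Rθ)
    (x ε : ℕ → EuclideanSpace ℝ (Fin d))
    (hx : ∀ t ∈ Finset.Icc 1 T, ‖x t‖ ≤ 1)
    (hxt : ∀ t ∈ Finset.Icc 1 T, ‖x t + ε t‖ ≤ 1)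
    (hε : ∀ t ∈ Finset.Icc 1 T,
      |⟪θs 1 - θs 0, ε t⟫| ≤ ρ * |⟪θs 1 - θs 0, x t⟫|)
    (p₀ : ℕ → ℝ) (hp₀ : ∀ t ∈ Finset.Icc 1 T, p₀ t ∈ Set.Ioc (0:ℝ) (1/2))
    (θh : ℕ → Fin 2 → EuclideanSpace ℝ (Fin d))
    (st : ℕ → ℕ)
    (hst : ∀ t, S.min' hSne < t →
      st t ∈ S ∧ st t < t ∧ ∀ s ∈ S, s < t → s ≤ st t)
    (π : ℕ → Fin 2 → ℝ)
    (hπwarm : ∀ t ∈ Finset.Icc 1 (S.min' hSne),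
      (∀ a, p₀ t ≤ π t a) ∧ π t 0 + π t 1 = 1)
    (atil : ℕ → Fin 2)
    (hgreedy : ∀ t ∈ Finset.Icc (S.min' hSne + 1) T,
      ∀ a, ⟪θh (st t) a, x t + ε t⟫ ≤ ⟪θh (st t) (atil t), x t + ε t⟫)
    (hπgreedy : ∀ t ∈ Finset.Icc (S.min' hSne + 1) T,
      π t (atil t) = 1 - p₀ t ∧ π t (1 - atil t) = p₀ t)
    (astar : ℕ → Fin 2)
    (hastar : ∀ t ∈ Finset.Icc 1 T, ∀ a, ⟪θs a, x t⟫ ≤ ⟪θs (astar t), x t⟫) :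
    ∀ T₀ : ℕ, S.min' hSne ≤ T₀ → T₀ < T →
      ∑ t ∈ Finset.Icc 1 T,
          (⟪θs (astar t), x t⟫ - (π t 0 * ⟪θs 0, x t⟫ + π t 1 * ⟪θs 1, x t⟫))
        ≤ 2 * T₀ * Rθ + (2 / (1 - ρ)) *
            ∑ t ∈ Finset.Icc (T₀+1) T,
              (p₀ t * Rθ + max ‖θh (st t) 0 - θs 0‖ ‖θh (st t) 1 - θs 1‖) := by
  intro T₀ hT₀ hT₀T
  have eq_zero_or_one : ∀ a : Fin 2, a = 0 ∨ a = 1 := by decide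
  have hsplit : Finset.Icc 1 T = Finset.Icc 1 T₀ ∪ Finset.Icc (T₀ + 1) T := by
    ext t
    simp only [Finset.mem_union, Finset.mem_Icc]
    omega
  have hdisj : Disjoint (Finset.Icc 1 T₀) (Finset.Icc (T₀ + 1) T) := by
    rw [Finset.disjoint_left]
    intro t h1 h2
    simp only [Finset.mem_Icc] at h1 h2
    omega
  rw [hsplit, Finset.sum_union hdisj, Finset.mul_sum]
  refine add_le_add ?_ (Finset.sum_le_sum fun t ht ↦ ?_)
  · have hround : ∀ t ∈ Finset.Icc 1 T₀,
        ⟪θs (astar t), x t⟫ - (π t 0 * ⟪θs 0, x t⟫ + π t 1 * ⟪θs 1, x t⟫) ≤ 2 * Rθ := by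
      intro t ht
      rw [Finset.mem_Icc] at ht
      have htT : t ∈ Finset.Icc 1 T := Finset.mem_Icc.2 ⟨ht.1, by omega⟩
      obtain ⟨hp, hp'⟩ := hp₀ t htT
      have hπ : 0 ≤ π t 0 ∧ 0 ≤ π t 1 ∧ π t 0 + π t 1 = 1 := by
        by_cases h : t ≤ S.min' hSne
        · obtain ⟨h1, h2⟩ := hπwarm t (Finset.mem_Icc.2 ⟨ht.1, h⟩)
          exact ⟨hp.le.trans (h1 0), hp.le.trans (h1 1), h2⟩
        · obtain ⟨h1, h2⟩ := hπgreedy t (Finset.mem_Icc.2 ⟨by omega, by omega⟩)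
          rcases eq_zero_or_one (atil t) with h | h <;>
            simp only [h, sub_zero, sub_self] at h1 h2 <;>
            refine ⟨?_, ?_, ?_⟩ <;> linarith
      obtain ⟨h0, h1, hsum⟩ := hπ
      have g (a : Fin 2) := inner_sub_inner_le_two_mul_s9 (hθ (astar t)) (hθ a) (hx t htT)
      have g0 := mul_le_mul_of_nonneg_left (g 0) h0
      have g1 := mul_le_mul_of_nonneg_left (g 1) h1
      have hπ1 : π t 1 = 1 - π t 0 := by linarith
      rw [hπ1] at g1 ⊢
      linarith
    refine (Finset.sum_le_card_nsmul _ _ _ hround).trans_eq ?_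
    simp only [Nat.card_Icc, nsmul_eq_mul, Nat.add_sub_cancel]
    ring
  · rw [Finset.mem_Icc] at ht
    have htT : t ∈ Finset.Icc 1 T := Finset.mem_Icc.2 ⟨by omega, ht.2⟩
    have htS : t ∈ Finset.Icc (S.min' hSne + 1) T := Finset.mem_Icc.2 ⟨by omega, ht.2⟩
    obtain ⟨hp, hp'⟩ := hp₀ t htT
    have hpI : p₀ t ∈ Set.Icc (0 : ℝ) 1 := ⟨hp.le, by linarith⟩
    obtain ⟨h1, h2⟩ := hπgreedy t htS
    have hg := hgreedy t htS
    have hstar : θs (astar t) = θs 0 ∨ θs (astar t) = θs 1 := by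
      rcases eq_zero_or_one (astar t) with h | h
      · exact .inl (by rw [h])
      · exact .inr (by rw [h])
    rcases eq_zero_or_one (atil t) with h | h <;>
      simp only [h, sub_zero, sub_self] at h1 h2 hg
    · have he := hε t htT
      rw [← neg_sub (θs 0), inner_neg_left, inner_neg_left, abs_neg, abs_neg] at he
      rw [h1, h2]
      exact greedy_round_regret_le hρ hpI (hθ 0) (hθ 1) (hx t htT) (hxt t htT) he (hg 1)
        (le_max_left _ _) (le_max_right _ _) hstar (hastar t htT 0)
    · rw [h1, h2, add_comm (p₀ t * _)]
      exact greedy_round_regret_le hρ hpI (hθ 1) (hθ 0) (hx t htT) (hxt t htT) (hε t htT) (hg 0)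
        (le_max_right _ _) (le_max_left _ _) hstar.symm (hastar t htT 1)
end

section
/- Fix an integer T ≥ 1, a nonempty set S ⊆ {1,…,T} with s_min := min S, constants R_θ > 0, ρ ∈ (0,1), p₀ ∈ (0, 1/2], and θ*_0, θ*_1 ∈ ℝ^d with ‖θ*_a‖₂ ≤ R_θ. For each t ∈ {1,…,T} let x_t, ε_t ∈ ℝ^d with ‖x_t‖₂ ≤ 1, x̃_t := x_t + ε_t, ‖x̃_t‖₂ ≤ 1, and |⟨θ*_1 − θ*_0, ε_t⟩| ≤ ρ·|⟨θ*_1 − θ*_0, x_t⟩|. For each s ∈ S let θ̂_0^{(s)}, θ̂_1^{(s)} ∈ ℝ^d be arbitrary. For t ≤ s_min let π_t(0), π_t(1) ≥ p₀ be arbitrary with π_t(0)+π_t(1)=1; for t > s_min let s_t := max{s ∈ S : s < t}, let ã_t ∈ argmax_{a∈{0,1}} ⟨θ̂_a^{(s_t)}, x̃_t⟩, and set π_t(ã_t) = 1 − p₀, π_t(1−ã_t) = p₀. Let a*_t ∈ argmax_{a∈{0,1}} ⟨θ*_a, x_t⟩ and define the clipped benchmark π̄*_t(a*_t) = 1 −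 p₀, π̄*_t(1−a*_t) = p₀. Then for every T₀ with s_min ≤ T₀ < T, Σ_{t=1}^T [Σ_a π̄*_t(a)·⟨θ*_a, x_t⟩ − Σ_a π_t(a)·⟨θ*_a, x_t⟩] ≤ 2·T₀·R_θ + (2·(1−2p₀)/(1−ρ))·Σ_{t=T₀+1}^T max_{a∈{0,1}} ‖θ̂_a^{(s_t)} − θ*_a‖₂. -/
open RealInnerProductSpace Finset

/-- If the arm `b` is greedy at the noisy context `x + e` for estimates within `M` of the true
parameters, and the noise perturbs the gap between the two arms by a factor of at most `ρ`, then
any better arm `a` beats `b` by at most `2 * M / (1 - ρ)`. -/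
theorem greedy_gap_le_s10 {E : Type*} [NormedAddCommGroup E] [InnerProductSpace ℝ E]
    {θ η : Fin 2 → E} {x e : E} {ρ M : ℝ} (hη : ∀ a, ‖η a - θ a‖ ≤ M) (hx : ‖x + e‖ ≤ 1)
    (he : |⟪θ 1 - θ 0, e⟫| ≤ ρ * |⟪θ 1 - θ 0, x⟫|) {a b : Fin 2}
    (hb : ⟪η a, x + e⟫ ≤ ⟪η b, x + e⟫) (hab : ⟪θ b, x⟫ ≤ ⟪θ a, x⟫) :
    (1 - ρ) * (⟪θ a, x⟫ - ⟪θ b, x⟫) ≤ 2 * M := by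
  have herr : ∀ c, |⟪η c - θ c, x + e⟫| ≤ M := fun c =>
    (abs_real_inner_le_norm _ _).trans <|
      (mul_le_of_le_one_right (norm_nonneg _) hx).trans (hη c)
  have hgap : |⟪θ a - θ b, e⟫| ≤ ρ * |⟪θ a - θ b, x⟫| := by
    have hswap : |⟪θ 0 - θ 1, e⟫| ≤ ρ * |⟪θ 0 - θ 1, x⟫| := by
      rw [← neg_sub (θ 1), inner_neg_left, inner_neg_left, abs_neg, abs_neg]
      exact he
    obtain rfl | rfl : a = 0 ∨ a = 1 := by omega
    all_goals obtain rfl | rfl : b = 0 ∨ b = 1 := by omega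
    all_goals first | assumption | simp
  have ha := abs_le.mp (herr a)
  have hb' := abs_le.mp (herr b)
  have hD : 0 ≤ ⟪θ a - θ b, x⟫ := by rw [inner_sub_left]; linarith
  rw [abs_of_nonneg hD] at hgap
  have hg := (abs_le.mp hgap).1
  simp only [inner_sub_left, inner_add_right] at *
  linarith

/-- The values of two distributions on two arms with rewards in `[-R, R]` differ by at most
`2 * R`. -/
theorem value_sub_le_two_mul {u : Fin 2 → ℝ} {R p q₀ q₁ : ℝ} (hu : ∀ a, |u a| ≤ R)
    (hp : 0 ≤ p) (hp' : p ≤ 1) (hq₀ : 0 ≤ q₀) (hq₁ : 0 ≤ q₁) (hq : q₀ + q₁ = 1) (a b : Fin 2) :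
    ((1 - p) * u a + p * u b) - (q₀ * u 0 + q₁ * u 1) ≤ 2 * R := by
  have ha := mul_le_mul_of_nonneg_left (abs_le.mp (hu a)).2 (sub_nonneg.mpr hp')
  have hb := mul_le_mul_of_nonneg_left (abs_le.mp (hu b)).2 hp
  have h0 := mul_le_mul_of_nonneg_left (abs_le.mp (hu 0)).1 hq₀
  have h1 := mul_le_mul_of_nonneg_left (abs_le.mp (hu 1)).1 hq₁
  have hR : q₀ * R + q₁ * R = R := by rw [← add_mul, hq, one_mul]
  linarith

/-- The value gap between two clipped policies with preferred arms `a` and `b`. -/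
theorem clipped_value_sub_eq (u q : Fin 2 → ℝ) {p : ℝ} {a b : Fin 2}
    (hq : q b = 1 - p) (hq' : q (1 - b) = p) :
    ((1 - p) * u a + p * u (1 - a)) - (q 0 * u 0 + q 1 * u 1) = (1 - 2 * p) * (u a - u b) := by
  obtain rfl | rfl : a = 0 ∨ a = 1 := by omega
  all_goals obtain rfl | rfl : b = 0 ∨ b = 1 := by omega
  all_goals
    simp only [sub_zero, sub_self] at hq hq' ⊢
    rw [hq, hq']
    ring

theorem stmt10 (d : ℕ) (hd : 1 ≤ d) (T : ℕ) (hT : 1 ≤ T)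
    (S : Finset ℕ) (hSne : S.Nonempty) (hSsub : ∀ s ∈ S, s ∈ Finset.Icc 1 T)
    (Rθ ρ p₀ : ℝ) (hRθ : 0 < Rθ) (hρ : ρ ∈ Set.Ioo (0:ℝ) 1)
    (hp₀ : p₀ ∈ Set.Ioc (0:ℝ) (1/2))
    (θs : Fin 2 → EuclideanSpace ℝ (Fin d)) (hθ : ∀ a, ‖θs a‖ ≤ Rθ)
    (x ε : ℕ → EuclideanSpace ℝ (Fin d))
    (hx : ∀ t ∈ Finset.Icc 1 T, ‖x t‖ ≤ 1)
    (hxt : ∀ t ∈ Finset.Icc 1 T, ‖x t + ε t‖ ≤ 1)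
    (hε : ∀ t ∈ Finset.Icc 1 T,
      |⟪θs 1 - θs 0, ε t⟫| ≤ ρ * |⟪θs 1 - θs 0, x t⟫|)
    (θh : ℕ → Fin 2 → EuclideanSpace ℝ (Fin d))
    (st : ℕ → ℕ)
    (hst : ∀ t, S.min' hSne < t →
      st t ∈ S ∧ st t < t ∧ ∀ s ∈ S, s < t → s ≤ st t)
    (π : ℕ → Fin 2 → ℝ)
    (hπwarm : ∀ t ∈ Finset.Icc 1 (S.min' hSne),
      (∀ a, p₀ ≤ π t a) ∧ π t 0 + π t 1 = 1)
    (atil : ℕ → Fin 2)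
    (hgreedy : ∀ t ∈ Finset.Icc (S.min' hSne + 1) T,
      ∀ a, ⟪θh (st t) a, x t + ε t⟫ ≤ ⟪θh (st t) (atil t), x t + ε t⟫)
    (hπgreedy : ∀ t ∈ Finset.Icc (S.min' hSne + 1) T,
      π t (atil t) = 1 - p₀ ∧ π t (1 - atil t) = p₀)
    (astar : ℕ → Fin 2)
    (hastar : ∀ t ∈ Finset.Icc 1 T, ∀ a, ⟪θs a, x t⟫ ≤ ⟪θs (astar t), x t⟫) :
    ∀ T₀ : ℕ, S.min' hSne ≤ T₀ → T₀ < T →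
      ∑ t ∈ Finset.Icc 1 T,
          (((1 - p₀) * ⟪θs (astar t), x t⟫ + p₀ * ⟪θs (1 - astar t), x t⟫)
            - (π t 0 * ⟪θs 0, x t⟫ + π t 1 * ⟪θs 1, x t⟫))
        ≤ 2 * T₀ * Rθ + (2 * (1 - 2 * p₀) / (1 - ρ)) *
            ∑ t ∈ Finset.Icc (T₀+1) T,
              max ‖θh (st t) 0 - θs 0‖ ‖θh (st t) 1 - θs 1‖ := by
  intro T₀ hmin hT₀
  obtain ⟨hρ0, hρ1⟩ := hρ
  obtain ⟨hp0, hp1⟩ := hp₀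
  have hρ' : 0 < 1 - ρ := sub_pos.mpr hρ1
  have hsplit : Finset.Icc 1 T = Finset.Icc 1 T₀ ∪ Finset.Icc (T₀ + 1) T := by
    ext t
    simp only [Finset.mem_union, Finset.mem_Icc]
    omega
  have hdisj : Disjoint (Finset.Icc 1 T₀) (Finset.Icc (T₀ + 1) T) := by
    rw [Finset.disjoint_left]
    intro t
    simp only [Finset.mem_Icc]
    omega
  rw [hsplit, Finset.sum_union hdisj]
  refine add_le_add ?_ ?_
  · have hcard : 2 * (T₀ : ℝ) * Rθ = ∑ _t ∈ Finset.Icc 1 T₀, 2 * Rθ := by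
      rw [Finset.sum_const, Nat.card_Icc, nsmul_eq_mul, Nat.add_sub_cancel]
      ring
    rw [hcard]
    refine Finset.sum_le_sum fun t ht => ?_
    rw [Finset.mem_Icc] at ht
    have htT : t ∈ Finset.Icc 1 T := Finset.mem_Icc.mpr (by omega)
    have hu : ∀ a, |⟪θs a, x t⟫| ≤ Rθ := fun a =>
      (abs_real_inner_le_norm _ _).trans <|
        (mul_le_of_le_one_right (norm_nonneg _) (hx t htT)).trans (hθ a)
    have hdist : 0 ≤ π t 0 ∧ 0 ≤ π t 1 ∧ π t 0 + π t 1 = 1 := by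
      rcases le_or_gt t (S.min' hSne) with hle | hlt
      · obtain ⟨hge, hsum⟩ := hπwarm t (Finset.mem_Icc.mpr ⟨ht.1, hle⟩)
        exact ⟨hp0.le.trans (hge 0), hp0.le.trans (hge 1), hsum⟩
      · obtain ⟨h₁, h₂⟩ := hπgreedy t (Finset.mem_Icc.mpr (by omega))
        obtain hb | hb : atil t = 0 ∨ atil t = 1 := by omega
        all_goals
          simp only [hb, sub_zero, sub_self] at h₁ h₂
          rw [h₁, h₂]
          refine ⟨?_, ?_, ?_⟩ <;> linarith
    exact value_sub_le_two_mul (u := fun a => ⟪θs a, x t⟫) hu hp0.le (by linarith)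
      hdist.1 hdist.2.1 hdist.2.2 (astar t) (1 - astar t)
  · rw [Finset.mul_sum]
    refine Finset.sum_le_sum fun t ht => ?_
    rw [Finset.mem_Icc] at ht
    have htT : t ∈ Finset.Icc 1 T := Finset.mem_Icc.mpr (by omega)
    have htS : t ∈ Finset.Icc (S.min' hSne + 1) T := Finset.mem_Icc.mpr (by omega)
    obtain ⟨h₁, h₂⟩ := hπgreedy t htS
    have herr : ∀ a, ‖θh (st t) a - θs a‖ ≤
        max ‖θh (st t) 0 - θs 0‖ ‖θh (st t) 1 - θs 1‖ :=
      Fin.forall_fin_two.mpr ⟨le_max_left _ _, le_max_right _ _⟩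
    have hgap := greedy_gap_le_s10 herr (hxt t htT) (hε t htT)
      (hgreedy t htS (astar t)) (hastar t htT (atil t))
    rw [clipped_value_sub_eq (fun a => ⟪θs a, x t⟫) (π t) h₁ h₂, div_mul_eq_mul_div,
      le_div_iff₀ hρ']
    have := mul_le_mul_of_nonneg_left hgap (show 0 ≤ 1 - 2 * p₀ by linarith)
    linarith
end

section
/- Let d ≥ 1, x ∈ ℝ^d, and let Σ_e be a d×d positive semidefinite matrix. Let ε be a random vector in ℝ^d with E[ε] = 0 and E[ε εᵀ] = Σ_e, set x̃ := x + ε, and assume ‖x̃‖₂ ≤ 1 almost surely. Let q ∈ (0,1] and let π(·|·) be a measurable map with π(0|v) + π(1|v) = 1 and π(a'|v) ≥ q for all v ∈ ℝ^d, a' ∈ {0,1}. Let A be a {0,1}-valued random variable whose conditional distribution given ε satisfies P(A = a' | ε) = π(a' | x̃). Fix numbers π^{nd}(0), π^{nd}(1) ≥ 0 with π^{nd}(0) + π^{nd}(1) = 1. Then for each a ∈ {0,1}: E[(π^{nd}(A)/π(A | x̃)) · 1{A = a} · x̃ x̃ᵀ] = π^{nd}(a) · (x xᵀ + Σ_e).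 -/
open MeasureTheory RealInnerProductSpace

theorem stmt11 (d : ℕ) (hd : 1 ≤ d)
    {Ω : Type*} [MeasurableSpace Ω] (μ : Measure Ω) [IsProbabilityMeasure μ]
    (x : EuclideanSpace ℝ (Fin d))
    (Sige : Matrix (Fin d) (Fin d) ℝ) (hSige : Sige.PosSemidef)
    (ε : Ω → EuclideanSpace ℝ (Fin d)) (hmeasε : Measurable ε)
    (hmean : ∀ i, ∫ ω, ε ω i ∂μ = 0)
    (hcov : ∀ i j, ∫ ω, ε ω i * ε ω j ∂μ = Sige i j)
    (hbdd : ∀ᵐ ω ∂μ, ‖x + ε ω‖ ≤ 1)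
    (q : ℝ) (hq : q ∈ Set.Ioc (0:ℝ) 1)
    (π : Fin 2 → EuclideanSpace ℝ (Fin d) → ℝ)
    (hπmeas : ∀ a, Measurable (π a))
    (hπsum : ∀ v, π 0 v + π 1 v = 1)
    (hπq : ∀ a v, q ≤ π a v)
    (A : Ω → Fin 2) (hmeasA : Measurable A)
    (hcond : ∀ (a : Fin 2) (g : EuclideanSpace ℝ (Fin d) → ℝ), Measurable g →
      Integrable (fun ω => g (ε ω)) μ →
      ∫ ω, (if A ω = a then (1:ℝ) else 0) * g (ε ω) ∂μ
        = ∫ ω, π a (x + ε ω) * g (ε ω) ∂μ)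
    (πnd : Fin 2 → ℝ) (hπnd0 : ∀ a, 0 ≤ πnd a) (hπnd : πnd 0 + πnd 1 = 1) :
    ∀ (a : Fin 2) (i j : Fin d),
      ∫ ω, (πnd (A ω) / π (A ω) (x + ε ω)) * (if A ω = a then (1:ℝ) else 0) *
          ((x + ε ω) i * (x + ε ω) j) ∂μ
        = πnd a * (x i * x j + Sige i j) := by
  intro a i j
  have hπpos : ∀ v, 0 < π a v := fun v => hq.1.trans_le (hπq a v)
  have hshift : ∀ k, Measurable fun e : EuclideanSpace ℝ (Fin d) => (x + e) k :=
    fun k => by fun_prop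
  have hcoord : ∀ k, ∀ᵐ ω ∂μ, ‖(x + ε ω) k‖ ≤ 1 := fun k => by
    filter_upwards [hbdd] with ω hω using (PiLp.norm_apply_le _ k).trans hω
  have hintX : ∀ k, Integrable (fun ω => (x + ε ω) k) μ := fun k =>
    Integrable.of_bound ((hshift k).comp hmeasε).aestronglyMeasurable 1 (hcoord k)
  have hintXX : Integrable (fun ω => (x + ε ω) i * (x + ε ω) j) μ :=
    (hintX j).bdd_mul ((hshift i).comp hmeasε).aestronglyMeasurable (hcoord i)
  have hintε : ∀ k, Integrable (fun ω => ε ω k) μ := fun k => by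
    refine ((hintX k).sub (integrable_const (x k))).congr (.of_forall fun ω => ?_)
    simp
  have hintεε : Integrable (fun ω => ε ω i * ε ω j) μ := by
    have h := ((hintXX.sub ((hintε j).const_mul (x i))).sub
      ((hintε i).const_mul (x j))).sub (integrable_const (x i * x j))
    refine h.congr (.of_forall fun ω => ?_)
    simp only [Pi.sub_apply, PiLp.add_apply]
    ring
  -- the second moment of the noisy context
  have hmoment : ∫ ω, (x + ε ω) i * (x + ε ω) j ∂μ = x i * x j + Sige i j := by
    have hexp : ∀ ω, (x + ε ω) i * (x + ε ω) j
        = x i * x j + x i * ε ω j + x j * ε ω i + ε ω i * ε ω j := fun ω => by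
      simp only [PiLp.add_apply]
      ring
    have h₁ : Integrable (fun ω => x i * x j + x i * ε ω j) μ :=
      (integrable_const _).add ((hintε j).const_mul (x i))
    have h₂ : Integrable (fun ω => x i * x j + x i * ε ω j + x j * ε ω i) μ :=
      h₁.add ((hintε i).const_mul (x j))
    simp only [hexp]
    rw [integral_add h₂ hintεε, integral_add h₁ ((hintε i).const_mul (x j)),
      integral_add (integrable_const _) ((hintε j).const_mul (x i)),
      integral_const_mul (x i) fun ω => ε ω j, integral_const_mul (x j) fun ω => ε ω i,
      hmean, hmean, hcov]
    simp
  let g : EuclideanSpace ℝ (Fin d) → ℝ :=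
    fun e => πnd a / π a (x + e) * ((x + e) i * (x + e) j)
  have hweight : Measurable fun e : EuclideanSpace ℝ (Fin d) => πnd a / π a (x + e) :=
    measurable_const.div ((hπmeas a).comp (measurable_const_add x))
  have hg : Measurable g := hweight.mul ((hshift i).mul (hshift j))
  have hintg : Integrable (fun ω => g (ε ω)) μ := by
    refine hintXX.bdd_mul (c := πnd a / q) (hweight.comp hmeasε).aestronglyMeasurable
      (.of_forall fun ω => ?_)
    rw [Real.norm_of_nonneg (div_nonneg (hπnd0 a) (hπpos _).le)]
    exact div_le_div_of_nonneg_left (hπnd0 a) hq.1 (hπq a _)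
  calc
    _ = ∫ ω, (if A ω = a then (1:ℝ) else 0) * g (ε ω) ∂μ := by
      congr 1 with ω
      by_cases h : A ω = a <;> simp [h, g]
    _ = ∫ ω, π a (x + ε ω) * g (ε ω) ∂μ := hcond a g hg hintg
    _ = ∫ ω, πnd a * ((x + ε ω) i * (x + ε ω) j) ∂μ := by
      congr 1 with ω
      rw [← mul_assoc, mul_div_cancel₀ _ (hπpos _).ne']
    _ = πnd a * (x i * x j + Sige i j) := by rw [integral_const_mul, hmoment]
end

section
/- Let d ≥ 1, x ∈ ℝ^d, θ*_0, θ*_1 ∈ ℝ^d, and let Σ_e be a d×d positive semidefinite matrix. Let ε be a random vector in ℝ^d with E[ε] = 0 and E[ε εᵀ] = Σ_e, set x̃ := x + ε, and assume ‖x̃‖₂ ≤ 1 almost surely. Let q ∈ (0,1] and let π(·|·) be a measurable map with π(0|v) + π(1|v) = 1 and π(a'|v) ≥ q for all v ∈ ℝ^d, a' ∈ {0,1}. Let A be a {0,1}-valued random variable whose conditional distribution given ε satisfies P(A = a' | ε) = π(a' | x̃). Let η be a bounded real random variable with E[η | ε, A] = 0 and set r := ⟨θ*_A, x⟩ + η.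 Fix numbers π^{nd}(0), π^{nd}(1) ≥ 0 with π^{nd}(0) + π^{nd}(1) = 1. Then for each a ∈ {0,1}: E[(π^{nd}(A)/π(A | x̃)) · 1{A = a} · x̃ · r] = π^{nd}(a) · (x xᵀ) · θ*_a. -/
open MeasureTheory RealInnerProductSpace

theorem stmt12 (d : ℕ) (hd : 1 ≤ d)
    {Ω : Type*} [MeasurableSpace Ω] (μ : Measure Ω) [IsProbabilityMeasure μ]
    (x : EuclideanSpace ℝ (Fin d))
    (θs : Fin 2 → EuclideanSpace ℝ (Fin d))
    (Sige : Matrix (Fin d) (Fin d) ℝ) (hSige : Sige.PosSemidef)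
    (ε : Ω → EuclideanSpace ℝ (Fin d)) (hmeasε : Measurable ε)
    (hmean : ∀ i, ∫ ω, ε ω i ∂μ = 0)
    (hcov : ∀ i j, ∫ ω, ε ω i * ε ω j ∂μ = Sige i j)
    (hbdd : ∀ᵐ ω ∂μ, ‖x + ε ω‖ ≤ 1)
    (q : ℝ) (hq : q ∈ Set.Ioc (0:ℝ) 1)
    (π : Fin 2 → EuclideanSpace ℝ (Fin d) → ℝ)
    (hπmeas : ∀ a, Measurable (π a))
    (hπsum : ∀ v, π 0 v + π 1 v = 1)
    (hπq : ∀ a v, q ≤ π a v)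
    (A : Ω → Fin 2) (hmeasA : Measurable A)
    (hcond : ∀ (a : Fin 2) (g : EuclideanSpace ℝ (Fin d) → ℝ), Measurable g →
      Integrable (fun ω => g (ε ω)) μ →
      ∫ ω, (if A ω = a then (1:ℝ) else 0) * g (ε ω) ∂μ
        = ∫ ω, π a (x + ε ω) * g (ε ω) ∂μ)
    (η : Ω → ℝ) (hmeasη : Measurable η)
    (Bη : ℝ) (hηbdd : ∀ ω, |η ω| ≤ Bη)
    (hηcond : ∀ g : EuclideanSpace ℝ (Fin d) × Fin 2 → ℝ, Measurable g →
      (∃ Cg : ℝ, ∀ p, |g p| ≤ Cg) →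
      ∫ ω, η ω * g (ε ω, A ω) ∂μ = 0)
    (r : Ω → ℝ) (hr : ∀ ω, r ω = ⟪θs (A ω), x⟫ + η ω)
    (πnd : Fin 2 → ℝ) (hπnd0 : ∀ a, 0 ≤ πnd a) (hπnd : πnd 0 + πnd 1 = 1) :
    ∀ (a : Fin 2) (i : Fin d),
      ∫ ω, (πnd (A ω) / π (A ω) (x + ε ω)) * (if A ω = a then (1:ℝ) else 0) *
          ((x + ε ω) i * r ω) ∂μ
        = πnd a * (x i * ⟪x, θs a⟫) := by
  intro a i
  have hπpos : ∀ v, 0 < π a v := fun v => hq.1.trans_le (hπq a v)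
  -- The coordinate of the observed context, truncated to zero outside the unit ball.
  let c : EuclideanSpace ℝ (Fin d) → ℝ := fun v => if ‖x + v‖ ≤ 1 then (x + v) i else 0
  have hc_meas : Measurable c :=
    Measurable.ite (measurableSet_le (by fun_prop) measurable_const) (by fun_prop)
      measurable_const
  have hc_abs : ∀ v, |c v| ≤ 1 := by
    intro v
    by_cases h : ‖x + v‖ ≤ 1
    · simpa only [c, if_pos h, Real.norm_eq_abs] using (PiLp.norm_apply_le (x + v) i).trans h
    · simp [c, if_neg h]
  have hc_ae : ∀ᵐ ω ∂μ, c (ε ω) = x i + ε ω i := by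
    filter_upwards [hbdd] with ω hω
    simp [c, if_pos hω]
  have hc_int : Integrable (fun ω => c (ε ω)) μ :=
    Integrable.of_bound (hc_meas.comp hmeasε).aestronglyMeasurable 1
      (.of_forall fun ω => hc_abs (ε ω))
  have hε_int : Integrable (fun ω => ε ω i) μ := by
    refine (hc_int.sub (integrable_const (x i))).congr ?_
    filter_upwards [hc_ae] with ω hω
    simp [hω]
  have hc_mean : ∫ ω, c (ε ω) ∂μ = x i := by
    rw [integral_congr_ae hc_ae, integral_add (integrable_const _) hε_int, hmean i]
    simp
  let g : EuclideanSpace ℝ (Fin d) → ℝ := fun v => c v / π a (x + v)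
  have hg_meas : Measurable g :=
    hc_meas.div ((hπmeas a).comp (measurable_const.add measurable_id))
  have hg_abs : ∀ v, |g v| ≤ 1 / q := by
    intro v
    rw [abs_div, abs_of_pos (hπpos _)]
    exact div_le_div₀ zero_le_one (hc_abs v) hq.1 (hπq a _)
  have hg_int : Integrable (fun ω => g (ε ω)) μ :=
    Integrable.of_bound (hg_meas.comp hmeasε).aestronglyMeasurable (1 / q)
      (.of_forall fun ω => hg_abs (ε ω))
  let h : EuclideanSpace ℝ (Fin d) × Fin 2 → ℝ :=
    fun p => (if p.2 = a then (1 : ℝ) else 0) * g p.1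
  have hh_meas : Measurable h :=
    (Measurable.ite (measurable_snd (measurableSet_singleton a)) measurable_const
      measurable_const).mul (hg_meas.comp measurable_fst)
  have hh_abs : ∀ p, |h p| ≤ 1 / q := by
    intro p
    by_cases hp : p.2 = a
    · simpa only [h, if_pos hp, one_mul] using hg_abs p.1
    · simpa [h, if_neg hp] using hq.1.le
  have hh_int : Integrable (fun ω => h (ε ω, A ω)) μ :=
    Integrable.of_bound (hh_meas.comp (hmeasε.prodMk hmeasA)).aestronglyMeasurable (1 / q)
      (.of_forall fun ω => hh_abs _)
  have hηh_int : Integrable (fun ω => η ω * h (ε ω, A ω)) μ :=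
    hh_int.bdd_mul hmeasη.aestronglyMeasurable (.of_forall fun ω => hηbdd ω)
  have hh_mean : ∫ ω, h (ε ω, A ω) ∂μ = x i := by
    refine (hcond a g hg_meas hg_int).trans (Eq.trans ?_ hc_mean)
    refine integral_congr_ae (.of_forall fun ω => ?_)
    exact mul_div_cancel₀ _ (hπpos _).ne'
  have hηh_mean : ∫ ω, η ω * h (ε ω, A ω) ∂μ = 0 := hηcond h hh_meas ⟨1 / q, hh_abs⟩
  calc
    _ = ∫ ω, (πnd a * ⟪x, θs a⟫ * h (ε ω, A ω) + πnd a * (η ω * h (ε ω, A ω))) ∂μ := by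
      refine integral_congr_ae ?_
      filter_upwards [hc_ae] with ω hω
      by_cases hA : A ω = a
      · simp only [h, g, hr, hA, hω, if_true, PiLp.add_apply, real_inner_comm x (θs a)]
        ring
      · simp [h, hA]
    _ = πnd a * (x i * ⟪x, θs a⟫) := by
      rw [integral_add (hh_int.const_mul _) (hηh_int.const_mul _), integral_const_mul,
        integral_const_mul, hh_mean, hηh_mean]
      ring
end
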